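/- Let d ≥ 1, m > 0, b ≥ 0, M > 0, and let f : ℝ^d → ℝ be differentiable, (m,b)-dissipative, and M-smooth. Fix R > 0, φ ∈ (0,1], ε ∈ (0,1], and g : [0,∞) → [0,∞) concave, nondecreasing, with g(r) = g(R) for all r ≥ R and φ·r ≤ g(r) ≤ r for all r ∈ [0,R], and define ρ(x,y) := g(‖x−y‖)·(1 + 2ε + ε‖x‖² + ε‖y‖²). Then for all x, y ∈ ℝ^d, f(x) − f(y) ≤ (2M·(b/m + 1) / (φ·ε·min(R,1)))·ρ(x,y). -/

import Mathlib

open RealInnerProductSpace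

/-!
Dissipativity forces `f` to have a critical point `z` with `‖z‖ ≤ √(b/m)`: a minimiser of `f` over
a slightly larger closed ball satisfies the first-order condition in the inward direction `-z`,
so `⟪z, ∇f z⟫ ≤ 0`, hence `m‖z‖² ≤ b`, so `z` is interior and `∇f z = 0`
(`exists_gradient_eq_zero`). Smoothness then gives `‖∇f x‖ ≤ M(‖x‖ + √(b/m))`, and the mean value
inequality on the ball of radius `a = max ‖x‖ ‖y‖` gives `f x - f y ≤ M(a + √(b/m))‖x - y‖`.
If `‖x - y‖ ≤ R`, then `g ‖x - y‖ ≥ φ‖x - y‖` and the quadratic weight dominates `a + √(b/m)`.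
Otherwise `g ‖x - y‖ = g R ≥ φR`, and the weight dominates `(a + √(b/m)) · 2a`, where
`2a ≥ ‖x - y‖`.
-/

section Critical

variable {E : Type*} [NormedAddCommGroup E] [InnerProductSpace ℝ E] [FiniteDimensional ℝ E]

theorem exists_gradient_eq_zero {f : E → ℝ} (hdiff : Differentiable ℝ f) {m b : ℝ} (hm : 0 < m)
    (hdiss : ∀ x : E, ⟪x, gradient f x⟫ ≥ m * ‖x‖ ^ 2 - b) :
    ∃ z : E, ‖z‖ ≤ √(b / m) ∧ gradient f z = 0 := by
  have hs : 0 ≤ √(b / m) := Real.sqrt_nonneg _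
  obtain ⟨z, hz, hmin⟩ := (isCompact_closedBall (0 : E) (√(b / m) + 1)).exists_isMinOn
    ⟨0, Metric.mem_closedBall_self (by positivity)⟩ hdiff.continuous.continuousOn
  have hseg : segment ℝ z (z + -z) ⊆ Metric.closedBall (0 : E) (√(b / m) + 1) := by
    rw [add_neg_cancel]
    exact (convex_closedBall _ _).segment_subset hz (Metric.mem_closedBall_self (by positivity))
  have hfirst : 0 ≤ fderiv ℝ f z (-z) :=
    hmin.localize.hasFDerivWithinAt_nonneg (hdiff z).hasFDerivAt.hasFDerivWithinAt
      (mem_posTangentConeAt_of_segment_subset hseg)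
  have hinner : ⟪z, gradient f z⟫ = fderiv ℝ f z z := by
    rw [real_inner_comm, gradient, InnerProductSpace.toDual_symm_apply]
  have hzs : ‖z‖ ≤ √(b / m) := by
    apply Real.le_sqrt_of_sq_le
    rw [le_div_iff₀ hm]
    have := hdiss z
    rw [map_neg] at hfirst
    linarith
  have hloc : IsLocalMin f z := by
    refine hmin.isLocalMin (Metric.closedBall_mem_nhds_of_mem ?_)
    rw [mem_ball_zero_iff]
    linarith
  exact ⟨z, hzs, by rw [gradient, hloc.fderiv_eq_zero, map_zero]⟩

/-- Growth estimate for a function whose `M`-Lipschitz gradient vanishes in the ball of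
radius `s`. -/
theorem sub_le_of_gradient_lipschitz {f : E → ℝ} (hdiff : Differentiable ℝ f) {M s a : ℝ}
    (hM : 0 ≤ M) (hsmooth : ∀ x y : E, ‖gradient f x - gradient f y‖ ≤ M * ‖x - y‖)
    {z : E} (hz : ‖z‖ ≤ s) (hz0 : gradient f z = 0) {x y : E} (hx : ‖x‖ ≤ a) (hy : ‖y‖ ≤ a) :
    f x - f y ≤ M * (a + s) * ‖x - y‖ := by
  have hgrad : ∀ w ∈ Metric.closedBall (0 : E) a, ‖fderiv ℝ f w‖ ≤ M * (a + s) := by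
    intro w hw
    have hw' : ‖w‖ ≤ a := by simpa using hw
    have hnorm : ‖gradient f w‖ = ‖fderiv ℝ f w‖ := LinearIsometryEquiv.norm_map _ _
    rw [← hnorm]
    calc ‖gradient f w‖ = ‖gradient f w - gradient f z‖ := by rw [hz0, sub_zero]
      _ ≤ M * ‖w - z‖ := hsmooth w z
      _ ≤ M * (a + s) := by
        gcongr
        exact (norm_sub_le w z).trans (add_le_add hw' hz)
  exact (le_abs_self _).trans ((convex_closedBall (0 : E) a).norm_image_sub_le_of_norm_fderiv_le
    (fun w _ => hdiff w) hgrad (by simpa using hy) (by simpa using hx))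

end Critical

/-- Continuity of a differentiable, `(m, b)`-dissipative, `M`-smooth function
with respect to the semimetric `ρ(x,y) = g(‖x−y‖)(1 + 2ε + ε‖x‖² + ε‖y‖²)`:
`f(x) − f(y) ≤ (2M(b/m + 1)/(φ ε min(R,1))) ρ(x,y)`. -/
theorem dissipative_smooth_semimetric_continuity
    (d : ℕ) (hd : 1 ≤ d) (m b M : ℝ) (hm : 0 < m) (hb : 0 ≤ b) (hM : 0 < M)
    (f : EuclideanSpace ℝ (Fin d) → ℝ)
    (hdiff : Differentiable ℝ f)
    (hdiss : ∀ x : EuclideanSpace ℝ (Fin d), ⟪x, gradient f x⟫ ≥ m * ‖x‖ ^ 2 - b)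
    (hsmooth : ∀ x y : EuclideanSpace ℝ (Fin d),
      ‖gradient f x - gradient f y‖ ≤ M * ‖x - y‖)
    (R φ ε : ℝ) (hR : 0 < R) (hφ : 0 < φ) (hφ1 : φ ≤ 1)
    (hε : 0 < ε) (hε1 : ε ≤ 1) (g : ℝ → ℝ)
    (hg_nonneg : ∀ r : ℝ, 0 ≤ r → 0 ≤ g r)
    (hg_concave : ConcaveOn ℝ (Set.Ici (0 : ℝ)) g)
    (hg_mono : MonotoneOn g (Set.Ici (0 : ℝ)))
    (hg_const : ∀ r : ℝ, R ≤ r → g r = g R)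
    (hg_bounds : ∀ r : ℝ, r ∈ Set.Icc (0 : ℝ) R → φ * r ≤ g r ∧ g r ≤ r)
    (ρ : EuclideanSpace ℝ (Fin d) → EuclideanSpace ℝ (Fin d) → ℝ)
    (hρ : ∀ x y : EuclideanSpace ℝ (Fin d),
      ρ x y = g ‖x - y‖ * (1 + 2 * ε + ε * ‖x‖ ^ 2 + ε * ‖y‖ ^ 2)) :
    ∀ x y : EuclideanSpace ℝ (Fin d),
      f x - f y ≤ (2 * M * (b / m + 1) / (φ * ε * min R 1)) * ρ x y := by
  intro x y
  obtain ⟨z, hz, hz0⟩ := exists_gradient_eq_zero hdiff hm hdiss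
  have hB : √(b / m) ^ 2 = b / m := Real.sq_sqrt (by positivity)
  have hs : 0 ≤ √(b / m) := Real.sqrt_nonneg _
  set s := √(b / m)
  obtain ⟨a, hxa, hya, ha2⟩ : ∃ a, ‖x‖ ≤ a ∧ ‖y‖ ≤ a ∧ a ^ 2 ≤ ‖x‖ ^ 2 + ‖y‖ ^ 2 := by
    refine ⟨max ‖x‖ ‖y‖, le_max_left _ _, le_max_right _ _, ?_⟩
    rcases max_choice ‖x‖ ‖y‖ with h | h <;> rw [h] <;> nlinarith [sq_nonneg ‖x‖, sq_nonneg ‖y‖]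
  have ha : 0 ≤ a := (norm_nonneg x).trans hxa
  have hD : ‖x - y‖ ≤ 2 * a := (norm_sub_le x y).trans (by linarith)
  have hmv := sub_le_of_gradient_lipschitz hdiff hM.le hsmooth hz hz0 hxa hya
  have hW : ε * (3 + a ^ 2) ≤ 1 + 2 * ε + ε * ‖x‖ ^ 2 + ε * ‖y‖ ^ 2 := by
    have := mul_le_mul_of_nonneg_left ha2 hε.le
    linarith
  have hμ : 0 < min R 1 := lt_min hR one_pos
  -- The claim with `M` and `ε` cancelled and the weight replaced by its lower bound `hW`.
  have hkey : φ * min R 1 * ((a + s) * ‖x - y‖) ≤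
      2 * (s ^ 2 + 1) * (3 + a ^ 2) * g ‖x - y‖ := by
    rcases le_total ‖x - y‖ R with h | h
    · have hg := (hg_bounds _ ⟨norm_nonneg _, h⟩).1
      have h1 : a + s ≤ 2 * (s ^ 2 + 1) * (3 + a ^ 2) := by
        nlinarith [sq_nonneg (a - 1), sq_nonneg (s - 1), mul_nonneg (sq_nonneg s) (sq_nonneg a)]
      calc φ * min R 1 * ((a + s) * ‖x - y‖) ≤ φ * 1 * ((a + s) * ‖x - y‖) := by
            gcongr
            exact min_le_right _ _
        _ = (a + s) * (φ * ‖x - y‖) := by ring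
        _ ≤ 2 * (s ^ 2 + 1) * (3 + a ^ 2) * g ‖x - y‖ := by gcongr
    · have hg := (hg_bounds R ⟨hR.le, le_rfl⟩).1
      rw [hg_const _ h]
      have h1 : (a + s) * (2 * a) ≤ 2 * (s ^ 2 + 1) * (3 + a ^ 2) := by
        nlinarith [sq_nonneg (s * a - 1), sq_nonneg s]
      calc φ * min R 1 * ((a + s) * ‖x - y‖) ≤ φ * R * ((a + s) * (2 * a)) := by
            gcongr
            exact min_le_left _ _
        _ = (a + s) * (2 * a) * (φ * R) := by ring
        _ ≤ 2 * (s ^ 2 + 1) * (3 + a ^ 2) * g R := by gcongr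
  refine hmv.trans ?_
  rw [hρ, ← hB, div_mul_eq_mul_div, le_div_iff₀ (by positivity)]
  have hg0 := hg_nonneg _ (norm_nonneg (x - y))
  calc M * (a + s) * ‖x - y‖ * (φ * ε * min R 1)
      = M * ε * (φ * min R 1 * ((a + s) * ‖x - y‖)) := by ring
    _ ≤ M * ε * (2 * (s ^ 2 + 1) * (3 + a ^ 2) * g ‖x - y‖) := by gcongr
    _ = 2 * M * (s ^ 2 + 1) * (g ‖x - y‖ * (ε * (3 + a ^ 2))) := by ring
    _ ≤ _ := by gcongr
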